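/- arXiv:2412.19280 — 12 statements merged into one kernel-verified Lean document; each statement's English description precedes it below -/
import Mathlib

section
/- Let G : ℓ^m → ℓ^r be strictly causal and K : ℓ^r → ℓ^m be causal. Then for every pair (v,d) ∈ ℓ^r × ℓ^m there exists a unique pair (y,u) ∈ ℓ^r × ℓ^m satisfying y = G u + v and u = K y + d. Consequently the closed-loop map Φ_{G,K} : (v,d) ↦ (y,u) is a bijection of ℓ^r × ℓ^m whose inverse is (y,u) ↦ (y − G u, u − K y); moreover the first component of the inverse, (y,u) ↦ y − G u, is causal in y and strictly causal in u, and the second component, (y,u) ↦ u − K y, is causal in both arguments. -/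
/-- Sequences with values in `ℝ^n` (with the Euclidean norm). -/
abbrev Traj (n : ℕ) : Type := ℕ → EuclideanSpace ℝ (Fin n)

/-- A causal operator on sequences. -/
def Causal {n m : ℕ} (A : Traj n → Traj m) : Prop :=
  ∀ (x x' : Traj n) (t : ℕ), (∀ s, s ≤ t → x s = x' s) → A x t = A x' t

/-- A strictly causal operator on sequences. -/
def StrictlyCausal {n m : ℕ} (A : Traj n → Traj m) : Prop :=
  ∀ (x x' : Traj n) (t : ℕ), (∀ s, s < t → x s = x' s) → A x t = A x' t

/-- Causal in the first argument, strictly causal in the second argument. -/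
def CausalSC {n q m : ℕ} (B : Traj n → Traj q → Traj m) : Prop :=
  ∀ (x x' : Traj n) (z z' : Traj q) (t : ℕ),
    (∀ s, s ≤ t → x s = x' s) → (∀ s, s < t → z s = z' s) → B x z t = B x' z' t

/-- Causal in both arguments. -/
def CausalCC {n q m : ℕ} (B : Traj n → Traj q → Traj m) : Prop :=
  ∀ (x x' : Traj n) (z z' : Traj q) (t : ℕ),
    (∀ s, s ≤ t → x s = x' s) → (∀ s, s ≤ t → z s = z' s) → B x z t = B x' z' t

/-- Strictly causal in both arguments. -/
def CausalSS {n q m : ℕ} (B : Traj n → Traj q → Traj m) : Prop :=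
  ∀ (x x' : Traj n) (z z' : Traj q) (t : ℕ),
    (∀ s, s < t → x s = x' s) → (∀ s, s < t → z s = z' s) → B x z t = B x' z' t

/-- Membership in `ℓ_p`: summability of `‖x t‖ ^ p`. -/
def InLp (p : ℝ) {E : Type*} [Norm E] (x : ℕ → E) : Prop :=
  Summable fun t => ‖x t‖ ^ p

/-- The `ℓ_p` norm `(∑ₜ ‖x t‖ ^ p) ^ (1/p)` of a sequence. -/
noncomputable def lpSeqNorm (p : ℝ) {E : Type*} [Norm E] (x : ℕ → E) : ℝ :=
  (∑' t, ‖x t‖ ^ p) ^ (1 / p)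

/-- The `ℝ^{r+m}`-valued sequence obtained by stacking `v` and `d`
(the norm of `(v t, d t)` is the Euclidean norm of the concatenated vector). -/
noncomputable def pairSeq {r m : ℕ} (v : Traj r) (d : Traj m) :
    ℕ → WithLp 2 (EuclideanSpace ℝ (Fin r) × EuclideanSpace ℝ (Fin m)) :=
  fun t => (WithLp.equiv 2 _).symm (v t, d t)

/-- An exponentially decaying sequence: `‖x t‖ ≤ k · α ^ t` with `k > 0`, `α ∈ (0,1)`. -/
def ExpDecay {E : Type*} [Norm E] (x : ℕ → E) : Prop :=
  ∃ k : ℝ, 0 < k ∧ ∃ α : ℝ, 0 < α ∧ α < 1 ∧ ∀ t, ‖x t‖ ≤ k * α ^ t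

theorem fixpt_aux {m : ℕ} (F : Traj m → Traj m) (hF : StrictlyCausal F) :
    ∃ u, F u = u := by
  have h1 : ∀ k s, s < k → F^[k+1] 0 s = F^[k] 0 s := by
    intro k
    induction k with
    | zero => intro s hs; omega
    | succ k ih =>
      intro s hs
      rw [Function.iterate_succ_apply' F (k+1), Function.iterate_succ_apply' F k]
      apply hF
      intro s' hs'
      rw [← Function.iterate_succ_apply' F k]
      exact ih s' (by omega)
  have h2 : ∀ j s, F^[s+1+j] 0 s = F^[s+1] 0 s := by
    intro j s
    induction j with
    | zero => rfl
    | succ j ih => rw [← ih]; exact h1 (s+1+j) s (by omega)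
  refine ⟨fun t => F^[t+1] 0 t, ?_⟩
  funext t
  rw [Function.iterate_succ_apply' F t]
  apply hF
  intro s hs
  obtain ⟨j, rfl⟩ := Nat.exists_eq_add_of_le (show s + 1 ≤ t from hs)
  exact (h2 j s).symm

theorem fixpt_unique_aux {m : ℕ} (F : Traj m → Traj m) (hF : StrictlyCausal F)
    (u u' : Traj m) (h : F u = u) (h' : F u' = u') : u = u' := by
  funext t
  induction t using Nat.strong_induction_on with
  | _ t ih =>
    rw [← h, ← h']
    exact hF u u' t ih

/-- well-posedness of the closed loop and the form of the inverse of the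
closed-loop map `Φ_{G,K} : (v,d) ↦ (y,u)`. -/
theorem statement0 {r m : ℕ} (G : Traj m → Traj r) (K : Traj r → Traj m)
    (hG : StrictlyCausal G) (hK : Causal K) :
    (∀ (v : Traj r) (d : Traj m),
        ∃! yu : Traj r × Traj m, yu.1 = G yu.2 + v ∧ yu.2 = K yu.1 + d) ∧
    Function.Bijective
      (fun yu : Traj r × Traj m => (yu.1 - G yu.2, yu.2 - K yu.1)) ∧
    (∀ (v : Traj r) (d : Traj m) (y : Traj r) (u : Traj m),
        (y = G u + v ∧ u = K y + d) ↔ (y - G u, u - K y) = (v, d)) ∧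
    CausalSC (fun (y : Traj r) (u : Traj m) => y - G u) ∧
    CausalCC (fun (y : Traj r) (u : Traj m) => u - K y) := by
  have hF : ∀ (v : Traj r) (d : Traj m), StrictlyCausal (fun u => K (G u + v) + d) := by
    intro v d x x' t h
    have : K (G x + v) t = K (G x' + v) t := by
      apply hK
      intro s hs
      have := hG x x' s (fun s' hs' => h s' (by omega))
      simp [this]
    simp [this]
  have h1 : ∀ (v : Traj r) (d : Traj m),
        ∃! yu : Traj r × Traj m, yu.1 = G yu.2 + v ∧ yu.2 = K yu.1 + d := by
    intro v d
    obtain ⟨u, hu⟩ := fixpt_aux _ (hF v d)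
    refine ⟨(G u + v, u), ⟨rfl, hu.symm⟩, ?_⟩
    rintro ⟨y', u'⟩ ⟨ha, hb⟩
    dsimp only at ha hb
    subst ha
    have := fixpt_unique_aux _ (hF v d) u' u hb.symm hu
    rw [this]
  have h3 : ∀ (v : Traj r) (d : Traj m) (y : Traj r) (u : Traj m),
        (y = G u + v ∧ u = K y + d) ↔ (y - G u, u - K y) = (v, d) := by
    intro v d y u
    rw [Prod.mk.injEq, sub_eq_iff_eq_add', sub_eq_iff_eq_add']
  refine ⟨h1, ⟨?_, ?_⟩, h3, ?_, ?_⟩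
  · rintro ⟨y, u⟩ ⟨y', u'⟩ h
    exact (h1 (y' - G u') (u' - K y')).unique ((h3 _ _ y u).2 h) ((h3 _ _ y' u').2 rfl)
  · rintro ⟨v, d⟩
    obtain ⟨⟨y, u⟩, h, -⟩ := h1 v d
    exact ⟨(y, u), (h3 v d y u).1 h⟩
  · intro x x' z z' t hx hz
    simp [hx t le_rfl, hG z z' t hz]
  · intro x x' z z' t hx hz
    simp [hz t le_rfl, hK x x' t hx]
end

section
/- Let G : ℓ^m → ℓ^r be strictly causal, K : ℓ^r → ℓ^m be causal, and let Φ = (Φ^y, Φ^u) be the closed-loop map; write Φ^{u°}(v,d) = Φ^u(v,d) − d. Then: (i) Φ^{u°} is causal in v and strictly causal in d (causal–strictly-causal); (ii) Φ^y(v,d) = G(Φ^u(v,d)) + v for every (v,d); (iii) for every (v,d), letting (ṽ,d̃) be the unique pair with Φ(ṽ,d̃) = (Φ^y(v,d), 0) (such a pair exists and is unique since Φ is a bijection), one has Φ^{u°}(v,d) = Φ^{u°}(ṽ,d̃); and (iv) the controller is recovered from the closed-loop map: for every y ∈ ℓ^r, K y = Φ^{u°}(ṽ,d̃), where (ṽ,d̃)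 is the unique pair with Φ(ṽ,d̃) = (y, 0). -/
theorem loop_aux {r m : ℕ} (G : Traj m → Traj r) (K : Traj r → Traj m)
    (hG : StrictlyCausal G) (hK : Causal K) (y y' v v' : Traj r) (u u' d d' : Traj m)
    (hy : y = G u + v) (hu : u = K y + d) (hy' : y' = G u' + v') (hu' : u' = K y' + d') (t : ℕ)
    (hv : ∀ s, s ≤ t → v s = v' s) (hd : ∀ s, s < t → d s = d' s) :
    ∀ s, s ≤ t → y s = y' s := by
  have key : ∀ s, s ≤ t → (y s = y' s ∧ (s < t → u s = u' s)) := by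
    intro s
    induction s using Nat.strong_induction_on with
    | _ s ih =>
      intro hs
      have h1 : y s = y' s := by
        have e : G u s = G u' s := hG u u' s fun q hq => (ih q hq (by omega)).2 (by omega)
        rw [hy, hy', Pi.add_apply, Pi.add_apply, e, hv s hs]
      refine ⟨h1, fun hst => ?_⟩
      have e : K y s = K y' s := by
        refine hK y y' s fun q hq => ?_
        rcases Nat.lt_or_eq_of_le hq with h | h
        · exact (ih q h (by omega)).1
        · rw [h]; exact h1
      rw [hu, hu', Pi.add_apply, Pi.add_apply, e, hd s hst]
  exact fun s hs => (key s hs).1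

/-- properties of the closed-loop map `Φ = (Φ^y, Φ^u)` of a strictly causal
plant `G` with a causal controller `K`. -/
theorem statement1 {r m : ℕ} (G : Traj m → Traj r) (K : Traj r → Traj m)
    (hG : StrictlyCausal G) (hK : Causal K)
    (Φ : Traj r × Traj m → Traj r × Traj m)
    (hΦ : ∀ (v : Traj r) (d : Traj m),
      (Φ (v, d)).1 = G (Φ (v, d)).2 + v ∧ (Φ (v, d)).2 = K (Φ (v, d)).1 + d) :
    -- (i) Φ^{u°} is causal in v and strictly causal in d
    CausalSC (fun (v : Traj r) (d : Traj m) => (Φ (v, d)).2 - d) ∧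
    -- (ii) Φ^y(v,d) = G(Φ^u(v,d)) + v
    (∀ (v : Traj r) (d : Traj m), (Φ (v, d)).1 = G ((Φ (v, d)).2) + v) ∧
    -- for every y there is a unique (ṽ,d̃) with Φ(ṽ,d̃) = (y,0)
    (∀ y : Traj r, ∃! vd : Traj r × Traj m, Φ vd = (y, (0 : Traj m))) ∧
    -- (iii) Φ^{u°}(v,d) = Φ^{u°}(ṽ,d̃) whenever Φ(ṽ,d̃) = (Φ^y(v,d), 0)
    (∀ (v v' : Traj r) (d d' : Traj m),
      Φ (v', d') = ((Φ (v, d)).1, (0 : Traj m)) →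
      (Φ (v, d)).2 - d = (Φ (v', d')).2 - d') ∧
    -- (iv) the controller is recovered from the closed-loop map
    (∀ (y v' : Traj r) (d' : Traj m),
      Φ (v', d') = (y, (0 : Traj m)) → K y = (Φ (v', d')).2 - d') := by
  have iv : ∀ (y v' : Traj r) (d' : Traj m),
      Φ (v', d') = (y, (0 : Traj m)) → K y = (Φ (v', d')).2 - d' := by
    intro y v' d' h
    have h2 := (hΦ v' d').2
    rw [h] at h2 ⊢
    exact eq_sub_of_add_eq h2.symm
  refine ⟨?_, fun v d => (hΦ v d).1, ?_, ?_, iv⟩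
  · intro v v' d d' t hv hd
    have e := loop_aux G K hG hK _ _ v v' _ _ d d' (hΦ v d).1 (hΦ v d).2
      (hΦ v' d').1 (hΦ v' d').2 t hv hd
    have e2 := hK _ _ t e
    have a : (Φ (v, d)).2 - d = K (Φ (v, d)).1 := sub_eq_of_eq_add (hΦ v d).2
    have b : (Φ (v', d')).2 - d' = K (Φ (v', d')).1 := sub_eq_of_eq_add (hΦ v' d').2
    change ((Φ (v, d)).2 - d) t = ((Φ (v', d')).2 - d') t
    rw [a, b, e2]
  · intro y
    refine ⟨(y - G 0, -K y), ?_, ?_⟩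
    · have e : (Φ (y - G 0, -K y)).1 = y := by
        funext t
        exact loop_aux G K hG hK _ y (y - G 0) (y - G 0) _ 0 (-K y) (-K y)
          (hΦ _ _).1 (hΦ _ _).2 (by abel) (by abel) t
          (fun _ _ => rfl) (fun _ _ => rfl) t le_rfl
      have e2 := (hΦ (y - G 0) (-K y)).2
      rw [e] at e2
      exact Prod.ext e (by rw [e2]; exact add_neg_cancel _)
    · rintro ⟨v, d⟩ h
      have h1 := (hΦ v d).1
      have h2 := (hΦ v d).2
      change Φ (v, d) = _ at h
      rw [h] at h1 h2
      exact Prod.ext (eq_sub_of_add_eq' h1.symm) (eq_neg_of_add_eq_zero_right h2.symm)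
  · intro v v' d d' h
    rw [← iv _ v' d' h]
    exact sub_eq_of_eq_add (hΦ v d).2
end

section
/- Let Ψ^{y°} : ℓ^r × ℓ^m → ℓ^r be strictly causal in both arguments and let Ψ^{u°} : ℓ^r × ℓ^m → ℓ^m be causal–strictly-causal. Define Ψ : ℓ^r × ℓ^m → ℓ^r × ℓ^m by Ψ(v,d) = (v + Ψ^{y°}(v,d), d + Ψ^{u°}(v,d)). Then Ψ is a bijection: for every (y,u) ∈ ℓ^r × ℓ^m there exists a unique (v,d) ∈ ℓ^r × ℓ^m with v = y − Ψ^{y°}(v,d) and d = u − Ψ^{u°}(v,d). Moreover, the first component of the inverse map Ψ^{-1}, (y,u) ↦ v, is causal in y and strictly causal in u, and the second component, (y,u) ↦ d, is causal in both arguments. -/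
theorem aux_agree {r m : ℕ}
    (Ψy : Traj r → Traj m → Traj r) (Ψu : Traj r → Traj m → Traj m)
    (hΨy : CausalSS Ψy) (hΨu : CausalSC Ψu)
    (y y' v v' : Traj r) (u u' d d' : Traj m)
    (h1 : v + Ψy v d = y) (h2 : d + Ψu v d = u)
    (h1' : v' + Ψy v' d' = y') (h2' : d' + Ψu v' d' = u') (t : ℕ) :
    (∀ s, s ≤ t → y s = y' s) → (∀ s, s < t → u s = u' s) →
    (∀ s, s ≤ t → v s = v' s) ∧ (∀ s, s < t → d s = d' s) := by
  have stepv : ∀ t, y t = y' t → (∀ s, s < t → v s = v' s) → (∀ s, s < t → d s = d' s) →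
      v t = v' t := by
    intro t hy hv hd
    have e := hΨy v v' d d' t hv hd
    have a := congrFun h1 t
    have b := congrFun h1' t
    simp only [Pi.add_apply] at a b
    rw [← a, ← b, e] at hy
    exact add_right_cancel hy
  have stepd : ∀ t, u t = u' t → (∀ s, s ≤ t → v s = v' s) → (∀ s, s < t → d s = d' s) →
      d t = d' t := by
    intro t hy hv hd
    have e := hΨu v v' d d' t hv hd
    have a := congrFun h2 t
    have b := congrFun h2' t
    simp only [Pi.add_apply] at a b
    rw [← a, ← b, e] at hy
    exact add_right_cancel hy
  induction t with
  | zero =>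
    intro hy _
    refine ⟨fun s hs => ?_, fun s hs => absurd hs (Nat.not_lt_zero s)⟩
    obtain rfl : s = 0 := by omega
    exact stepv 0 (hy 0 le_rfl) (fun s hs => absurd hs (Nat.not_lt_zero s))
      (fun s hs => absurd hs (Nat.not_lt_zero s))
  | succ t ih =>
    intro hy hu
    obtain ⟨iv, id⟩ := ih (fun s hs => hy s (by omega)) (fun s hs => hu s (by omega))
    have hd : ∀ s, s < t + 1 → d s = d' s := by
      intro s hs
      rcases Nat.lt_or_ge s t with h | h
      · exact id s h
      · obtain rfl : s = t := by omega
        exact stepd s (hu s hs) iv id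
    refine ⟨fun s hs => ?_, hd⟩
    rcases Nat.lt_or_ge s (t + 1) with h | h
    · exact iv s (by omega)
    · obtain rfl : s = t + 1 := by omega
      exact stepv _ (hy _ le_rfl) (fun s hs => iv s (by omega)) hd

theorem aux_exists {r m : ℕ}
    (Ψy : Traj r → Traj m → Traj r) (Ψu : Traj r → Traj m → Traj m)
    (hΨy : CausalSS Ψy) (hΨu : CausalSC Ψu) (y : Traj r) (u : Traj m) :
    ∃ v d, v = y - Ψy v d ∧ d = u - Ψu v d := by
  let F : Traj r × Traj m → Traj r × Traj m := fun p =>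
    (y - Ψy p.1 p.2, u - Ψu (y - Ψy p.1 p.2) p.2)
  have hF : ∀ (n : ℕ) (a b : Traj r × Traj m),
      (∀ s, s < n → a.1 s = b.1 s ∧ a.2 s = b.2 s) →
      ∀ s, s < n + 1 → (F a).1 s = (F b).1 s ∧ (F a).2 s = (F b).2 s := by
    intro n a b h
    have k1 : ∀ s, s < n + 1 → (F a).1 s = (F b).1 s := by
      intro s hs
      have := hΨy a.1 b.1 a.2 b.2 s (fun q hq => (h q (by omega)).1)
        (fun q hq => (h q (by omega)).2)
      simp only [F, Pi.sub_apply, this]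
    intro s hs
    refine ⟨k1 s hs, ?_⟩
    have := hΨu (F a).1 (F b).1 a.2 b.2 s (fun q hq => k1 q (by omega))
        (fun q hq => (h q (by omega)).2)
    simp only [F] at this
    simp only [F, Pi.sub_apply, this]
  let G : ℕ → Traj r × Traj m := fun n => F^[n] (0, 0)
  have hG : ∀ n, G (n + 1) = F (G n) := fun n => Function.iterate_succ_apply' F n _
  have h1 : ∀ n s, s < n → (G n).1 s = (G (n+1)).1 s ∧ (G n).2 s = (G (n+1)).2 s := by
    intro n
    induction n with
    | zero => intro s hs; omega
    | succ n ih =>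
      rw [hG (n+1)]
      nth_rewrite 1 [hG n]
      nth_rewrite 2 [hG n]
      exact hF n _ _ ih
  let w : Traj r × Traj m := (fun t => (G (t+1)).1 t, fun t => (G (t+1)).2 t)
  have h2 : ∀ n s, s < n → w.1 s = (G n).1 s ∧ w.2 s = (G n).2 s := by
    intro n s hs
    induction n, hs using Nat.le_induction with
    | base => exact ⟨rfl, rfl⟩
    | succ n hn ih =>
      obtain ⟨a, b⟩ := h1 n s hn
      exact ⟨ih.1.trans a, ih.2.trans b⟩
  have key : F w = w := by
    have : ∀ s, (F w).1 s = w.1 s ∧ (F w).2 s = w.2 s := by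
      intro s
      have a := hF s w (G s) (h2 s) s (by omega)
      rw [← hG s] at a
      exact a
    exact Prod.ext (funext fun s => (this s).1) (funext fun s => (this s).2)
  have e1 : y - Ψy w.1 w.2 = w.1 := congrArg Prod.fst key
  have e2 : u - Ψu (y - Ψy w.1 w.2) w.2 = w.2 := congrArg Prod.snd key
  rw [e1] at e2
  exact ⟨w.1, w.2, e1.symm, e2.symm⟩

/-- invertibility of `Ψ(v,d) = (v + Ψ^{y°}(v,d), d + Ψ^{u°}(v,d))` and the
causality structure of the inverse. -/
theorem statement2 {r m : ℕ}
    (Ψy : Traj r → Traj m → Traj r) (Ψu : Traj r → Traj m → Traj m)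
    (hΨy : CausalSS Ψy) (hΨu : CausalSC Ψu) :
    -- for every (y,u) there is a unique (v,d) with v = y − Ψ^{y°}(v,d), d = u − Ψ^{u°}(v,d)
    (∀ (y : Traj r) (u : Traj m),
      ∃! vd : Traj r × Traj m,
        vd.1 = y - Ψy vd.1 vd.2 ∧ vd.2 = u - Ψu vd.1 vd.2) ∧
    -- Ψ is a bijection
    Function.Bijective
      (fun vd : Traj r × Traj m => (vd.1 + Ψy vd.1 vd.2, vd.2 + Ψu vd.1 vd.2)) ∧
    -- the inverse map has first component causal in y, strictly causal in u,
    -- and second component causal in both arguments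
    (∀ Ξ : Traj r × Traj m → Traj r × Traj m,
      (∀ vd : Traj r × Traj m,
        Ξ (vd.1 + Ψy vd.1 vd.2, vd.2 + Ψu vd.1 vd.2) = vd) →
      (∀ yu : Traj r × Traj m,
        ((Ξ yu).1 + Ψy (Ξ yu).1 (Ξ yu).2, (Ξ yu).2 + Ψu (Ξ yu).1 (Ξ yu).2) = yu) →
      CausalSC (fun (y : Traj r) (u : Traj m) => (Ξ (y, u)).1) ∧
      CausalCC (fun (y : Traj r) (u : Traj m) => (Ξ (y, u)).2)) := by
  have uniq : ∀ (v v' : Traj r) (d d' : Traj m), v + Ψy v d = v' + Ψy v' d' →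
      d + Ψu v d = d' + Ψu v' d' → v = v' ∧ d = d' := by
    intro v v' d d' h1 h2
    have := fun t => aux_agree Ψy Ψu hΨy hΨu _ _ v v' _ _ d d' h1 h2 rfl rfl t
      (fun _ _ => rfl) (fun _ _ => rfl)
    exact ⟨funext fun t => (this t).1 t le_rfl,
      funext fun t => (this (t+1)).2 t (Nat.lt_succ_self t)⟩
  refine ⟨?_, ⟨?_, ?_⟩, ?_⟩
  · intro y u
    obtain ⟨v, d, h1, h2⟩ := aux_exists Ψy Ψu hΨy hΨu y u
    refine ⟨(v, d), ⟨h1, h2⟩, ?_⟩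
    rintro ⟨v', d'⟩ ⟨h1', h2'⟩
    obtain ⟨a, b⟩ := uniq v' v d' d
      ((eq_sub_iff_add_eq.1 h1').trans (eq_sub_iff_add_eq.1 h1).symm)
      ((eq_sub_iff_add_eq.1 h2').trans (eq_sub_iff_add_eq.1 h2).symm)
    exact Prod.ext a b
  · rintro ⟨v, d⟩ ⟨v', d'⟩ h
    obtain ⟨a, b⟩ := uniq v v' d d' (congrArg Prod.fst h) (congrArg Prod.snd h)
    exact Prod.ext a b
  · rintro ⟨y, u⟩
    obtain ⟨v, d, h1, h2⟩ := aux_exists Ψy Ψu hΨy hΨu y u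
    exact ⟨(v, d), Prod.ext (eq_sub_iff_add_eq.1 h1) (eq_sub_iff_add_eq.1 h2)⟩
  · intro Ξ _ hR
    have ag := fun (y y' : Traj r) (u u' : Traj m) (t : ℕ) =>
      aux_agree Ψy Ψu hΨy hΨu y y' (Ξ (y, u)).1 (Ξ (y', u')).1 u u' (Ξ (y, u)).2 (Ξ (y', u')).2
        (congrArg Prod.fst (hR (y, u))) (congrArg Prod.snd (hR (y, u)))
        (congrArg Prod.fst (hR (y', u'))) (congrArg Prod.snd (hR (y', u'))) t
    refine ⟨fun y y' u u' t hy hu => (ag y y' u u' t hy hu).1 t le_rfl, ?_⟩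
    intro y y' u u' t hy hu
    obtain ⟨hv, hd⟩ := ag y y' u u' t hy (fun s hs => hu s hs.le)
    have e := hΨu _ _ _ _ t hv hd
    have a := congrFun (congrArg Prod.snd (hR (y, u))) t
    have b := congrFun (congrArg Prod.snd (hR (y', u'))) t
    simp only [Pi.add_apply] at a b
    have h := hu t le_rfl
    rw [← a, ← b, e] at h
    exact add_right_cancel h
end

section
/- Let Υ : ℓ^n → ℓ^n be an operator such that the map a ↦ Υ a − a is strictly causal. Then Υ is a bijection of ℓ^n and its inverse Υ^{-1} is causal; for every a ∈ ℓ^n, the sequence b = Υ^{-1} a is the unique sequence satisfying b_t = a_t − (Υ b − b)_t for all t ∈ ℕ. -/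
theorem key_det {n : ℕ} (Υ : Traj n → Traj n)
    (h : StrictlyCausal (fun a => Υ a - a)) (b b' : Traj n) (t : ℕ)
    (hs : ∀ s, s ≤ t → Υ b s = Υ b' s) : b t = b' t := by
  induction t using Nat.strong_induction_on with
  | _ t ih =>
    have h1 := h b b' t (fun s hst => ih s hst (fun r hr => hs r (by omega)))
    have h2 := hs t le_rfl
    simp only [Pi.sub_apply] at h1
    rw [h2] at h1
    exact sub_right_injective h1

theorem key_ex {n : ℕ} (Υ : Traj n → Traj n)
    (h : StrictlyCausal (fun a => Υ a - a)) (a : Traj n) : ∃ b, Υ b = a := by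
  let F : Traj n → Traj n := fun b => a - (Υ b - b)
  have hF : ∀ (x y : Traj n) (t : ℕ), (∀ s, s < t → x s = y s) → F x t = F y t := by
    intro x y t hxy
    have h1 := h x y t hxy
    change a t - (Υ x - x) t = a t - (Υ y - y) t
    exact congrArg (fun z => a t - z) h1
  have h1 : ∀ k s, s < k → F^[k] a s = F^[k+1] a s := by
    intro k
    induction k with
    | zero => intro s hs; omega
    | succ k ih =>
      intro s hs
      rw [Function.iterate_succ_apply' F k, Function.iterate_succ_apply' F (k+1)]
      exact hF _ _ _ (fun r hr => ih r (by omega))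
  have h2 : ∀ k s, s < k → F^[k] a s = F^[s+1] a s := by
    intro k s hs
    induction k, hs using Nat.le_induction with
    | base => rfl
    | succ k hk ih => rw [← h1 k s hk, ih]
  refine ⟨fun t => F^[t+1] a t, ?_⟩
  funext t
  have h3 : F (fun t => F^[t+1] a t) t = F^[t+1] a t := by
    rw [Function.iterate_succ_apply' F t]
    exact hF _ _ _ (fun s hs => (h2 t s hs).symm)
  set b : Traj n := fun t => F^[t+1] a t with hb
  have h4 : a t - (Υ b t - b t) = b t := h3
  have h5 : a t - Υ b t = 0 := by
    have : a t - Υ b t = a t - (Υ b t - b t) - b t := by abel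
    rw [this, h4, sub_self]
  exact (sub_eq_zero.mp h5).symm

/-- if `a ↦ Υ a − a` is strictly causal then `Υ` is a bijection with causal
inverse, and `b = Υ⁻¹ a` is the unique sequence with `b t = a t − (Υ b − b) t` for all `t`. -/
theorem statement3 {n : ℕ} (Υ : Traj n → Traj n)
    (h : StrictlyCausal (fun a => Υ a - a)) :
    Function.Bijective Υ ∧
    (∀ Ξ : Traj n → Traj n, (∀ a, Ξ (Υ a) = a) → (∀ a, Υ (Ξ a) = a) → Causal Ξ) ∧
    (∀ a : Traj n, ∃! b : Traj n, ∀ t : ℕ, b t = a t - (Υ b - b) t) ∧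
    (∀ a b : Traj n, Υ b = a → ∀ t : ℕ, b t = a t - (Υ b - b) t) := by
  have hfix : ∀ a b : Traj n, Υ b = a → ∀ t : ℕ, b t = a t - (Υ b - b) t := by
    intro a b hab t
    subst hab
    simp
  have hinj : Function.Injective Υ := by
    intro b b' hb
    funext t
    exact key_det Υ h b b' t (fun s _ => by rw [hb])
  refine ⟨⟨hinj, key_ex Υ h⟩, ?_, ?_, hfix⟩
  · intro Ξ _ hr x x' t hx
    exact key_det Υ h _ _ t (fun s hs => by rw [hr, hr]; exact hx s hs)
  · intro a
    obtain ⟨b, hb⟩ := key_ex Υ h a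
    refine ⟨b, hfix a b hb, ?_⟩
    intro c hc
    apply hinj
    rw [hb]
    funext t
    have h4 : c t = a t - (Υ c t - c t) := hc t
    have h5 : a t - Υ c t = 0 := by
      have : a t - Υ c t = a t - (Υ c t - c t) - c t := by abel
      rw [this, ← h4, sub_self]
    exact (sub_eq_zero.mp h5).symm
end

section
/- Let G : ℓ^m → ℓ^r be strictly causal. A map Ψ = (Ψ^y, Ψ^u) : ℓ^r × ℓ^m → ℓ^r × ℓ^m, with Ψ^{u°}(v,d) := Ψ^u(v,d) − d, equals the closed-loop map Φ_{G,K} of G with some causal controller K : ℓ^r → ℓ^m if and only if the following three conditions hold: (a) Ψ^{u°} is causal–strictly-causal; (b) Ψ^y(v,d) = G(Ψ^u(v,d)) + v for every (v,d); (c) for every (v,d), Ψ^{u°}(v,d) = Ψ^{u°}(ṽ,d̃), where (ṽ,d̃) is the unique pair with Ψ(ṽ,d̃) = (Ψ^y(v,d), 0) (Ψ is a bijection under (a)–(b)). Moreover, under (a)–(c) the achieving controller is unique and given by K y = Ψ^{u°}(Ψ^{-1}(y, 0)) for every y ∈ ℓ^r. -/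
theorem sc_fixed {m : ℕ} (F : Traj m → Traj m) (hF : StrictlyCausal F) :
    ∃ d : Traj m, F d = d := by
  have key : ∀ t k, t ≤ k → (F^[k+1] 0) t = (F^[t+1] 0) t := by
    intro t
    induction t using Nat.strong_induction_on with
    | _ t ih =>
      intro k hk
      rw [Function.iterate_succ_apply', Function.iterate_succ_apply']
      apply hF
      intro s hs
      obtain ⟨k', rfl⟩ : ∃ k', k = k' + 1 := ⟨k - 1, by omega⟩
      obtain ⟨t', rfl⟩ : ∃ t', t = t' + 1 := ⟨t - 1, by omega⟩
      rw [ih s hs k' (by omega), ih s hs t' (by omega)]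
  refine ⟨fun t => (F^[t+1] 0) t, ?_⟩
  funext t
  show _ = (F^[t+1] 0) t
  rw [Function.iterate_succ_apply']
  apply hF
  intro s hs
  obtain ⟨t', rfl⟩ : ∃ t', t = t' + 1 := ⟨t - 1, by omega⟩
  exact (key s t' (by omega)).symm

theorem exists_K {r m : ℕ} (G : Traj m → Traj r)
    (Ψy : Traj r → Traj m → Traj r) (Ψu : Traj r → Traj m → Traj m)
    (ha : CausalSC (fun (v : Traj r) (d : Traj m) => Ψu v d - d))
    (hb : ∀ (v : Traj r) (d : Traj m), Ψy v d = G (Ψu v d) + v) :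
    ∃ D : Traj r → Traj m, Causal D ∧
      ∀ y, Ψu (y - G 0) (D y) = 0 ∧ Ψy (y - G 0) (D y) = y := by
  have h1 : ∀ v, ∃ d, Ψu v d = 0 := by
    intro v
    obtain ⟨d, hd⟩ := sc_fixed (fun d => -(Ψu v d - d)) (by
      intro x x' t h
      have := ha v v x x' t (fun _ _ => rfl) h
      simpa using congrArg (fun z => -z) this)
    refine ⟨d, ?_⟩
    simpa using hd
  choose E hE using h1
  refine ⟨fun y => E (y - G 0), ?_, fun y => ⟨hE _, ?_⟩⟩
  · intro x x' t
    induction t using Nat.strong_induction_on with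
    | _ t ih =>
      intro h
      have := ha (x - G 0) (x' - G 0) (E (x - G 0)) (E (x' - G 0)) t
        (fun s hs => by simp [h s hs])
        (fun s hs => ih s hs (fun q hq => h q (by omega)))
      simpa [hE] using this
  · rw [hb, hE]; abel

/-- characterization of the achievable closed-loop maps of a strictly causal
plant `G` under causal output feedback, with uniqueness of the achieving controller and
its formula `K y = Ψ^{u°}(Ψ⁻¹(y,0))`. -/
theorem statement4 {r m : ℕ} (G : Traj m → Traj r) (hG : StrictlyCausal G)
    (Ψy : Traj r → Traj m → Traj r) (Ψu : Traj r → Traj m → Traj m) :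
    -- Ψ is a closed-loop map of G with some causal controller K iff (a)-(c) hold
    ((∃ K : Traj r → Traj m, Causal K ∧
        ∀ (v : Traj r) (d : Traj m),
          Ψy v d = G (Ψu v d) + v ∧ Ψu v d = K (Ψy v d) + d)
      ↔
      (CausalSC (fun (v : Traj r) (d : Traj m) => Ψu v d - d) ∧
       (∀ (v : Traj r) (d : Traj m), Ψy v d = G (Ψu v d) + v) ∧
       (∀ (v v' : Traj r) (d d' : Traj m),
          (Ψy v' d', Ψu v' d') = (Ψy v d, (0 : Traj m)) →
          Ψu v d - d = Ψu v' d' - d'))) ∧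
    -- under (a)-(c), the achieving controller is unique and given by the formula
    ((CausalSC (fun (v : Traj r) (d : Traj m) => Ψu v d - d) ∧
      (∀ (v : Traj r) (d : Traj m), Ψy v d = G (Ψu v d) + v) ∧
      (∀ (v v' : Traj r) (d d' : Traj m),
          (Ψy v' d', Ψu v' d') = (Ψy v d, (0 : Traj m)) →
          Ψu v d - d = Ψu v' d' - d')) →
      (∃! K : Traj r → Traj m, Causal K ∧
        ∀ (v : Traj r) (d : Traj m),
          Ψy v d = G (Ψu v d) + v ∧ Ψu v d = K (Ψy v d) + d) ∧
      (∀ K : Traj r → Traj m, Causal K →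
        (∀ (v : Traj r) (d : Traj m),
          Ψy v d = G (Ψu v d) + v ∧ Ψu v d = K (Ψy v d) + d) →
        ∀ (y v' : Traj r) (d' : Traj m),
          (Ψy v' d', Ψu v' d') = (y, (0 : Traj m)) →
          K y = Ψu v' d' - d')) := by
  have main : (CausalSC (fun (v : Traj r) (d : Traj m) => Ψu v d - d) ∧
      (∀ (v : Traj r) (d : Traj m), Ψy v d = G (Ψu v d) + v) ∧
      (∀ (v v' : Traj r) (d d' : Traj m),
          (Ψy v' d', Ψu v' d') = (Ψy v d, (0 : Traj m)) →
          Ψu v d - d = Ψu v' d' - d')) → (∃ K : Traj r → Traj m, Causal K ∧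
        ∀ (v : Traj r) (d : Traj m),
          Ψy v d = G (Ψu v d) + v ∧ Ψu v d = K (Ψy v d) + d) := by
    rintro ⟨ha, hb, hc⟩
    obtain ⟨D, hD, hy⟩ := exists_K G Ψy Ψu ha hb
    refine ⟨fun y => - D y, fun x x' t h => ?_, fun v d => ⟨hb v d, ?_⟩⟩
    · simp [hD x x' t h]
    · have := hc v (Ψy v d - G 0) d (D (Ψy v d)) (by rw [(hy _).1, (hy _).2])
      rw [(hy _).1, zero_sub] at this
      exact sub_eq_iff_eq_add.mp this
  have form : ∀ K : Traj r → Traj m,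
        (∀ (v : Traj r) (d : Traj m),
          Ψy v d = G (Ψu v d) + v ∧ Ψu v d = K (Ψy v d) + d) →
        ∀ (y v' : Traj r) (d' : Traj m),
          (Ψy v' d', Ψu v' d') = (y, (0 : Traj m)) →
          K y = Ψu v' d' - d' := by
    intro K hK y v' d' h
    have h1 : Ψy v' d' = y := congrArg Prod.fst h
    rw [(hK v' d').2, h1]; abel
  refine ⟨⟨?_, main⟩, fun h => ⟨?_, fun K _ => form K⟩⟩
  · rintro ⟨K, hK, h⟩
    refine ⟨?_, fun v d => (h v d).1, ?_⟩
    · intro x x' z z' t hx hz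
      have e : ∀ v d, Ψu v d - d = K (Ψy v d) := by
        intro v d
        rw [sub_eq_iff_eq_add]; exact (h v d).2
      have key : ∀ s, s ≤ t → Ψy x z s = Ψy x' z' s ∧ (s < t → Ψu x z s = Ψu x' z' s) := by
        intro s
        induction s using Nat.strong_induction_on with
        | _ s ih =>
          intro hs
          have hy : Ψy x z s = Ψy x' z' s := by
            rw [(h x z).1, (h x' z').1, Pi.add_apply, Pi.add_apply, hx s hs,
              hG _ _ s (fun q hq => (ih q hq (by omega)).2 (by omega))]
          refine ⟨hy, fun hst => ?_⟩
          rw [(h x z).2, (h x' z').2, Pi.add_apply, Pi.add_apply, hz s hst]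
          congr 1
          apply hK
          intro q hq
          rcases hq.lt_or_eq with hq | rfl
          · exact (ih q hq (by omega)).1
          · exact hy
      simp only [e]
      exact hK _ _ t (fun s hs => (key s hs).1)
    · intro v v' d d' hh
      rw [← form K h _ v' d' hh]
      rw [sub_eq_iff_eq_add]; exact (h v d).2
  · obtain ⟨K, hK, hK'⟩ := main h
    refine ⟨K, ⟨hK, hK'⟩, ?_⟩
    rintro K2 ⟨_, h2⟩
    obtain ⟨D, _, hy⟩ := exists_K G Ψy Ψu h.1 h.2.1
    funext y
    rw [form K2 h2 y _ (D y) (by rw [(hy y).1, (hy y).2]),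
      form K hK' y _ (D y) (by rw [(hy y).1, (hy y).2])]
end

section
/- Let G : ℓ^m → ℓ^r be strictly causal and let M : ℓ^r × ℓ^m → ℓ^m be causal–strictly-causal. For every (v,d) ∈ ℓ^r × ℓ^m, the pair of equations β = v + G(d − δ) − G(0) and δ = −M(β, δ) has a unique solution (β,δ) ∈ ℓ^r × ℓ^m. Define Ψ^u(v,d) := d − δ and Ψ^y(v,d) := G(Ψ^u(v,d)) + v. Then the map (Ψ^y, Ψ^u) is an achievable closed-loop map of G: there exists a causal controller K : ℓ^r → ℓ^m such that the closed-loop map Φ_{G,K} equals (Ψ^y, Ψ^u). -/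
theorem sc_fix_unique {n : ℕ} (F : Traj n → Traj n) (hF : StrictlyCausal F)
    (x y : Traj n) (hx : x = F x) (hy : y = F y) : x = y := by
  funext t
  induction t using Nat.strong_induction_on with
  | _ t ih =>
    rw [hx, hy]
    exact hF x y t ih

theorem sc_fix_exists {n : ℕ} (F : Traj n → Traj n) (hF : StrictlyCausal F) :
    ∃ x, x = F x := by
  have step : ∀ k s, s < k → F^[k+1] 0 s = F^[k] 0 s := by
    intro k
    induction k with
    | zero => intro s hs; omega
    | succ k ih =>
      intro s hs
      rw [Function.iterate_succ_apply' F (k+1), Function.iterate_succ_apply' F k]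
      exact hF _ _ s (fun q hq => by
        have := ih q (by omega)
        rwa [Function.iterate_succ_apply' F k] at this)
  have stab : ∀ s j, F^[s+1+j] 0 s = F^[s+1] 0 s := by
    intro s j
    induction j with
    | zero => rfl
    | succ j ih => rw [← ih]; exact step (s+1+j) s (by omega)
  refine ⟨fun t => F^[t+1] 0 t, ?_⟩
  funext t
  rw [Function.iterate_succ_apply' F t]
  refine hF _ _ t (fun s hs => ?_)
  obtain ⟨j, rfl⟩ := Nat.exists_eq_add_of_le (show s + 1 ≤ t from hs)
  exact stab s j

/-- any causal–strictly-causal parameter `M` generates, through the unique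
solution of `β = v + G(d − δ) − G(0)`, `δ = −M(β,δ)`, an achievable closed-loop map of the
strictly causal plant `G`. -/
theorem statement5 {r m : ℕ} (G : Traj m → Traj r) (M : Traj r → Traj m → Traj m)
    (hG : StrictlyCausal G) (hM : CausalSC M) :
    -- the fixed-point equations have a unique solution for every (v,d)
    (∀ (v : Traj r) (d : Traj m),
      ∃! βδ : Traj r × Traj m,
        βδ.1 = v + G (d - βδ.2) - G 0 ∧ βδ.2 = -(M βδ.1 βδ.2)) ∧
    -- the resulting maps Ψ^u(v,d) = d − δ, Ψ^y(v,d) = G(Ψ^u(v,d)) + v are achieved by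
    -- some causal controller K
    (∀ S : Traj r × Traj m → Traj r × Traj m,
      (∀ (v : Traj r) (d : Traj m),
        (S (v, d)).1 = v + G (d - (S (v, d)).2) - G 0 ∧
        (S (v, d)).2 = -(M (S (v, d)).1 (S (v, d)).2)) →
      ∃ K : Traj r → Traj m, Causal K ∧
        ∀ (v : Traj r) (d : Traj m),
          d - (S (v, d)).2 = K (G (d - (S (v, d)).2) + v) + d) := by
  refine ⟨fun v d => ?_, fun S hS => ?_⟩
  · have hF : StrictlyCausal (fun δ : Traj m => -(M (v + G (d - δ) - G 0) δ)) := by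
      intro x x' t h
      simp only [Pi.neg_apply]
      congr 1
      refine hM _ _ _ _ t (fun s hs => ?_) h
      have : G (d - x) s = G (d - x') s := hG _ _ s (fun q hq => by
        simp only [Pi.sub_apply]; rw [h q (by omega)])
      simp only [Pi.sub_apply, Pi.add_apply]
      rw [this]
    obtain ⟨δ, hδ⟩ := sc_fix_exists _ hF
    refine ⟨(v + G (d - δ) - G 0, δ), ⟨rfl, hδ⟩, ?_⟩
    rintro ⟨b, e⟩ ⟨h1, h2⟩
    simp only at h1 h2
    subst h1
    have : e = δ := sc_fix_unique _ hF e δ h2 hδ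
    rw [this]
  · have hF : ∀ β : Traj r, StrictlyCausal (fun δ : Traj m => -(M β δ)) := by
      intro β x x' t h
      simp only [Pi.neg_apply]
      congr 1
      exact hM _ _ _ _ t (fun s hs => rfl) h
    choose D hD using fun β => sc_fix_exists _ (hF β)
    refine ⟨fun y => -(D (y - G 0)), ?_, ?_⟩
    · intro y y' t h
      simp only [Pi.neg_apply]
      congr 1
      induction t using Nat.strong_induction_on with
      | _ t ih =>
        rw [hD (y - G 0), hD (y' - G 0)]
        simp only [Pi.neg_apply]
        congr 1
        refine hM _ _ _ _ t (fun s hs => ?_) (fun s hs => ?_)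
        · simp only [Pi.sub_apply]; rw [h s hs]
        · exact ih s hs (fun q hq => h q (by omega))
    · intro v d
      obtain ⟨h1, h2⟩ := hS v d
      have e : G (d - (S (v, d)).2) + v - G 0 = (S (v, d)).1 := by
        rw [add_comm]; exact h1.symm
      have := sc_fix_unique _ (hF (S (v, d)).1) _ _ h2 (hD _)
      simp only [e]
      rw [← this]
      abel
end

section
/- Let G : ℓ^m → ℓ^r be strictly causal and let M : ℓ^r × ℓ^m → ℓ^m be causal–strictly-causal. Define S : ℓ^r × ℓ^m → ℓ^r × ℓ^m by S(v,d) = (β,δ), where (β,δ) is the unique solution of β = v + G(d − δ) − G(0) and δ = −M(β,δ). Then S is idempotent: S(S(v,d)) = S(v,d) for every (v,d) ∈ ℓ^r × ℓ^m. -/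
/-- the solution operator `S : (v,d) ↦ (β,δ)` of the fixed-point equations
`β = v + G(d − δ) − G(0)`, `δ = −M(β,δ)` is idempotent. -/
theorem statement7 {r m : ℕ} (G : Traj m → Traj r) (M : Traj r → Traj m → Traj m)
    (hG : StrictlyCausal G) (hM : CausalSC M)
    (S : Traj r × Traj m → Traj r × Traj m)
    (hS : ∀ (v : Traj r) (d : Traj m),
      (S (v, d)).1 = v + G (d - (S (v, d)).2) - G 0 ∧
      (S (v, d)).2 = -(M (S (v, d)).1 (S (v, d)).2)) :
    ∀ (v : Traj r) (d : Traj m), S (S (v, d)) = S (v, d) := by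
  intro v d
  have h1 := (hS v d).2
  generalize S (v, d) = p at h1 ⊢
  obtain ⟨b, e⟩ := p
  obtain ⟨h2, h3⟩ := hS b e
  generalize S (b, e) = q at h2 h3 ⊢
  obtain ⟨b', e'⟩ := q
  simp only at h1 h2 h3
  have key : ∀ t, b' t = b t ∧ e' t = e t := by
    intro t
    induction t using Nat.strong_induction_on with
    | _ t ih =>
      have hb : b' t = b t := by
        have hg : G (e - e') t = G 0 t := by
          apply hG
          intro s hs
          simp [(ih s hs).2]
        have := congrFun h2 t
        simpa [hg] using this
      refine ⟨hb, ?_⟩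
      have hm : M b' e' t = M b e t := by
        apply hM
        · intro s hs
          rcases hs.lt_or_eq with h | h
          · exact (ih s h).1
          · rw [h, hb]
        · intro s hs
          exact (ih s hs).2
      have a1 := congrFun h1 t
      have a3 := congrFun h3 t
      rw [a1, a3, Pi.neg_apply, Pi.neg_apply, hm]
  exact Prod.ext (funext fun t => (key t).1) (funext fun t => (key t).2)
end

section
/- Let G : ℓ^m → ℓ^r be strictly causal, let M : ℓ^r × ℓ^m → ℓ^m be causal–strictly-causal, and let K : ℓ^r → ℓ^m be the unique causal controller whose closed-loop map with G equals the map (Ψ^y, Ψ^u) constructed from M (via the unique solution (β,δ) of β = v + G(d − δ) − G(0), δ = −M(β,δ), with Ψ^u(v,d) = d − δ and Ψ^y(v,d) = G(Ψ^u(v,d)) + v). Then for every y ∈ ℓ^r, the sequence K y is the unique sequence u° ∈ ℓ^m satisfying u° = M(y − G(0), −u°); this fixed-point equation has a unique solution since M is strictly causal in its second argument. -/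
/-- recursive implementation of the controller achieving the closed-loop maps
generated by `M`: for every `y`, `K y` is the unique `u°` with `u° = M(y − G(0), −u°)`. -/
theorem statement8 {r m : ℕ} (G : Traj m → Traj r) (M : Traj r → Traj m → Traj m)
    (K : Traj r → Traj m)
    (hG : StrictlyCausal G) (hM : CausalSC M) (hK : Causal K)
    (S : Traj r × Traj m → Traj r × Traj m)
    (hS : ∀ (v : Traj r) (d : Traj m),
      (S (v, d)).1 = v + G (d - (S (v, d)).2) - G 0 ∧
      (S (v, d)).2 = -(M (S (v, d)).1 (S (v, d)).2))
    -- K achieves the closed-loop maps Ψ^u(v,d) = d − δ, Ψ^y(v,d) = G(Ψ^u(v,d)) + v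
    (hach : ∀ (v : Traj r) (d : Traj m),
      d - (S (v, d)).2 = K (G (d - (S (v, d)).2) + v) + d) :
    ∀ y : Traj r,
      (∃! u0 : Traj m, u0 = M (y - G 0) (-u0)) ∧
      K y = M (y - G 0) (-(K y)) := by
  intro y
  have key : K y = M (y - G 0) (-(K y)) := by
    have h1 := hach (y - G (K y)) 0
    obtain ⟨h2, h3⟩ := hS (y - G (K y)) 0
    generalize S (y - G (K y), 0) = p at h1 h2 h3
    obtain ⟨b, e⟩ := p
    simp only [zero_sub, add_zero] at h1 h2 h3
    have hu : -e = K y := by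
      funext t
      induction t using Nat.strong_induction_on with
      | _ t ih =>
        rw [h1]
        apply hK
        intro s hs
        have hg : G (-e) s = G (K y) s :=
          hG _ _ _ (fun q hq => ih q (lt_of_lt_of_le hq hs))
        simp [hg]
    have hb : b = y - G 0 := by
      rw [h2, hu]; abel
    have he : e = -(K y) := by rw [← hu, neg_neg]
    rw [hb, he] at h3
    exact neg_injective h3
  refine ⟨⟨K y, key, ?_⟩, key⟩
  intro u hu
  have hu : u = M (y - G 0) (-u) := hu
  funext t
  induction t using Nat.strong_induction_on with
  | _ t ih =>
    rw [hu, key]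
    apply hM
    · intro s _; rfl
    · intro s hs
      simp [ih s hs]
end

section
/- Let p be a real number with 1 ≤ p < ∞. Let G : ℓ^m → ℓ^r be strictly causal, ℓ_p-stable and incrementally finite-gain ℓ_p-stable, and let K : ℓ^r → ℓ^m be causal. Since G∘K is strictly causal, the operator I − G K : y ↦ y − G(K y) is a bijection of ℓ^r with causal inverse. Then the closed-loop map Φ_{G,K} is ℓ_p-stable (i.e., for all v ∈ ℓ_p^r and d ∈ ℓ_p^m the closed-loop signals satisfy y ∈ ℓ_p^r and u ∈ ℓ_p^m) if and only if the operator K ∘ (I − G K)^{-1} is ℓ_p-stable (i.e., for every a ∈ ℓ_p^r, the unique y with y = G(K y) + a satisfies K y ∈ ℓ_p^m). -/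
theorem inLp_iff {E : Type*} [NormedAddCommGroup E] {p : ℝ} (hp : 1 ≤ p) (x : ℕ → E) :
    InLp p x ↔ Memℓp (E := fun _ : ℕ => E) x (ENNReal.ofReal p) := by
  have h0 : 0 < p := by linarith
  have h : (ENNReal.ofReal p).toReal = p := ENNReal.toReal_ofReal h0.le
  rw [memℓp_gen_iff (by rw [h]; exact h0), h]
  rfl

theorem inLp_add {E : Type*} [NormedAddCommGroup E] {p : ℝ} (hp : 1 ≤ p) {x y : ℕ → E}
    (hx : InLp p x) (hy : InLp p y) : InLp p (x + y) := by
  rw [inLp_iff hp] at *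
  exact hx.add hy

theorem inLp_sub {E : Type*} [NormedAddCommGroup E] {p : ℝ} (hp : 1 ≤ p) {x y : ℕ → E}
    (hx : InLp p x) (hy : InLp p y) : InLp p (x - y) := by
  rw [inLp_iff hp] at *
  exact hx.sub hy

theorem inLp_zero {E : Type*} [NormedAddCommGroup E] {p : ℝ} (hp : 1 ≤ p) :
    InLp p (0 : ℕ → E) := by
  rw [inLp_iff hp]
  exact zero_memℓp

/-- truncation to times `< t` -/
noncomputable def truncSeq {n : ℕ} (t : ℕ) (x : Traj n) : Traj n := fun s => if s < t then x s else 0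

theorem inLp_truncSeq {n : ℕ} {p : ℝ} (hp : 1 ≤ p) (t : ℕ) (x : Traj n) :
    InLp p (truncSeq t x) := by
  apply summable_of_ne_finset_zero (s := Finset.range t)
  intro s hs
  have : ¬ s < t := by simpa using hs
  have h0 : p ≠ 0 := by linarith
  simp [truncSeq, this, h0]

theorem diff_inLp {r m : ℕ} (p : ℝ) (hp : 1 ≤ p)
    (G : Traj m → Traj r) (hG : StrictlyCausal G)
    (hGstab : ∀ u : Traj m, InLp p u → InLp p (G u))
    (hGifg : ∃ γ : ℝ, 0 ≤ γ ∧ ∀ u₁ u₂ : Traj m, InLp p u₁ → InLp p u₂ →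
      lpSeqNorm p (G u₁ - G u₂) ≤ γ * lpSeqNorm p (u₁ - u₂))
    (u w : Traj m) (hd : InLp p (u - w)) : InLp p (G u - G w) := by
  obtain ⟨γ, hγ, H⟩ := hGifg
  have h0 : 0 < p := by linarith
  apply summable_of_sum_range_le (c := (γ * lpSeqNorm p (u - w)) ^ p)
  · intro t; positivity
  intro t
  have hu := inLp_truncSeq hp t u
  have hw := inLp_truncSeq hp t w
  have hS : InLp p (G (truncSeq t u) - G (truncSeq t w)) :=
    inLp_sub hp (hGstab _ hu) (hGstab _ hw)
  have e : ∀ x : Traj m, ∀ s, s < t → G x s = G (truncSeq t x) s := by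
    intro x s hs
    apply hG
    intro i hi
    simp [truncSeq, hi.trans hs]
  have h1 : ∑ s ∈ Finset.range t, ‖(G u - G w) s‖ ^ p
      ≤ ∑' s, ‖(G (truncSeq t u) - G (truncSeq t w)) s‖ ^ p := by
    rw [Finset.sum_congr rfl (g := fun s => ‖(G (truncSeq t u) - G (truncSeq t w)) s‖ ^ p)]
    · exact Summable.sum_le_tsum _ (fun _ _ => by positivity) hS
    · intro s hs
      rw [Finset.mem_range] at hs
      simp only [Pi.sub_apply]
      rw [e u s hs, e w s hs]
  have h2 : lpSeqNorm p (truncSeq t u - truncSeq t w) ≤ lpSeqNorm p (u - w) := by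
    unfold lpSeqNorm
    apply Real.rpow_le_rpow
    · exact tsum_nonneg fun _ => by positivity
    · apply Summable.tsum_le_tsum _ (inLp_sub hp hu hw) hd
      intro s
      apply Real.rpow_le_rpow (norm_nonneg _) _ h0.le
      by_cases hs : s < t <;> simp [truncSeq, hs]
    · positivity
  have h3 := (H _ _ hu hw).trans (mul_le_mul_of_nonneg_left h2 hγ)
  have hn : 0 ≤ ∑' s, ‖(G (truncSeq t u) - G (truncSeq t w)) s‖ ^ p :=
    tsum_nonneg fun _ => by positivity
  have h4 := Real.rpow_le_rpow (Real.rpow_nonneg hn _) h3 h0.le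
  rw [← Real.rpow_mul hn, one_div, inv_mul_cancel₀ h0.ne', Real.rpow_one] at h4
  exact h1.trans h4

theorem fix_exists {r : ℕ} (F : Traj r → Traj r) (hF : StrictlyCausal F) : ∃ y, F y = y := by
  have key : ∀ k s, s < k → (F^[k] 0) s = (F^[k+1] 0) s := by
    intro k
    induction k with
    | zero => intro s hs; omega
    | succ k ih =>
      intro s hs
      rw [Function.iterate_succ_apply' F (k+1), Function.iterate_succ_apply' F k]
      apply hF
      intro i hi
      rw [← Function.iterate_succ_apply' F k]
      exact ih i (by omega)
  have key2 : ∀ s j, (F^[s+1+j] 0) s = (F^[s+1] 0) s := by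
    intro s j
    induction j with
    | zero => rfl
    | succ j ih => rw [← ih]; exact (key (s+1+j) s (by omega)).symm
  refine ⟨fun s => (F^[s+1] 0) s, ?_⟩
  funext t
  show _ = (F^[t+1] 0) t
  rw [Function.iterate_succ_apply']
  apply hF
  intro s hs
  obtain ⟨j, rfl⟩ := Nat.exists_eq_add_of_lt hs
  have := key2 s j
  rw [show s + 1 + j = s + j + 1 by omega] at this
  exact this.symm

theorem sol_causal {r : ℕ} (F : Traj r → Traj r) (hF : StrictlyCausal F) (y y' : Traj r) (t : ℕ)
    (h : ∀ s, s ≤ t → (y - F y) s = (y' - F y') s) : ∀ s, s ≤ t → y s = y' s := by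
  intro s
  induction s using Nat.strong_induction_on with
  | _ s ih =>
    intro hs
    have h1 := h s hs
    have h2 : F y s = F y' s := hF _ _ _ fun i hi => ih i hi (by omega)
    simp only [Pi.sub_apply] at h1
    rw [h2] at h1
    exact sub_left_injective h1

/-- Desoer–Chen: for a strictly causal, ℓ_p-stable, incrementally
finite-gain ℓ_p-stable plant `G` and a causal controller `K`, the closed loop is
ℓ_p-stable iff `K ∘ (I − G K)⁻¹` is ℓ_p-stable. -/
theorem statement9 {r m : ℕ} (p : ℝ) (hp : 1 ≤ p)
    (G : Traj m → Traj r) (K : Traj r → Traj m)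
    (hG : StrictlyCausal G)
    (hGstab : ∀ u : Traj m, InLp p u → InLp p (G u))
    (hGifg : ∃ γ : ℝ, 0 ≤ γ ∧ ∀ u₁ u₂ : Traj m, InLp p u₁ → InLp p u₂ →
      lpSeqNorm p (G u₁ - G u₂) ≤ γ * lpSeqNorm p (u₁ - u₂))
    (hK : Causal K) :
    -- I − G K is a bijection of ℓ^r with causal inverse
    Function.Bijective (fun y : Traj r => y - G (K y)) ∧
    (∀ Ξ : Traj r → Traj r,
      (∀ y, Ξ (y - G (K y)) = y) → (∀ a, Ξ a - G (K (Ξ a)) = a) → Causal Ξ) ∧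
    -- the closed loop is ℓ_p-stable iff K ∘ (I − G K)⁻¹ is ℓ_p-stable
    ((∀ (v : Traj r) (d : Traj m) (y : Traj r) (u : Traj m),
        y = G u + v → u = K y + d → InLp p v → InLp p d → InLp p y ∧ InLp p u)
      ↔
      (∀ a : Traj r, InLp p a → ∀ y : Traj r, y = G (K y) + a → InLp p (K y))) := by
  have hF : StrictlyCausal (fun y => G (K y)) := by
    intro x x' t h
    exact hG _ _ _ fun s hs => hK _ _ _ fun i hi => h i (by omega)
  refine ⟨⟨?_, ?_⟩, ?_, ?_, ?_⟩
  · intro y y' h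
    funext t
    exact sol_causal _ hF y y' t (fun s _ => congrFun h s) t le_rfl
  · intro a
    obtain ⟨y, hy⟩ := fix_exists (fun y => G (K y) + a) (by
      intro x x' t h
      have := hF x x' t h
      simp only [Pi.add_apply] at this ⊢
      rw [this])
    refine ⟨y, ?_⟩
    have hy' : G (K y) + a = y := hy
    show y - G (K y) = a
    rw [sub_eq_iff_eq_add, add_comm, hy']
  · intro Ξ _ h2 a a' t h
    refine sol_causal _ hF (Ξ a) (Ξ a') t ?_ t le_rfl
    intro s hs
    have e1 := congrFun (h2 a) s
    have e2 := congrFun (h2 a') s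
    exact e1.trans ((h s hs).trans e2.symm)
  · intro H a ha y hy
    exact (H a 0 y (K y) hy (by simp) ha (inLp_zero hp)).2
  · intro H v d y u hy hu hv hd
    have hKy : InLp p (K y) := by
      refine H ((G u - G (K y)) + v) ?_ y ?_
      · refine inLp_add hp (diff_inLp p hp G hG hGstab hGifg u (K y) ?_) hv
        rwa [hu, add_sub_cancel_left]
      · rw [← add_assoc, add_sub_cancel]
        exact hy
    have hu' : InLp p u := by
      rw [hu]; exact inLp_add hp hKy hd
    refine ⟨?_, hu'⟩
    rw [hy]
    exact inLp_add hp (hGstab u hu') hv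
end

section
/- Let p be a real number with 1 ≤ p < ∞. Let G : ℓ^m → ℓ^r be strictly causal and incrementally finite-gain ℓ_p-stable, and let K' : ℓ^r → ℓ^m be a causal base controller that is itself ℓ_p-stable as an operator and whose closed-loop map Φ_{G,K'} is ℓ_p-stable and incrementally finite-gain ℓ_p-stable. Then for every causal controller K'' : ℓ^r → ℓ^m whose closed-loop map Φ_{G,K''} is ℓ_p-stable, there exists a causal, ℓ_p-stable operator Q : ℓ^r → ℓ^m such that the controller K defined by K y := u°, with u° the unique solution of u° = K'(y) + Q(y − G u°), satisfies Φ_{G,K} = Φ_{G,K''}. -/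
theorem InLp_sub_aux {n : ℕ} {p : ℝ} (hp : 1 ≤ p) {x y : Traj n}
    (hx : InLp p x) (hy : InLp p y) : InLp p (x - y) := by
  have h0 : 0 < p := by linarith
  have e : (ENNReal.ofReal p).toReal = p := ENNReal.toReal_ofReal h0.le
  have key : ∀ z : Traj n, InLp p z ↔ Memℓp z (ENNReal.ofReal p) := by
    intro z
    rw [memℓp_gen_iff (by rw [e]; exact h0), e]
    rfl
  rw [key] at *
  exact hx.sub hy

theorem fixed_exists_aux {m : ℕ} (F : Traj m → Traj m) (hF : StrictlyCausal F) :
    ∃ u, u = F u := by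
  have key : ∀ n k s, s < n → F^[n + k] 0 s = F^[n] 0 s := by
    intro n
    induction n with
    | zero => intro k s hs; omega
    | succ n ih =>
      intro k s hs
      have e : n + 1 + k = (n + k) + 1 := by omega
      rw [e, Function.iterate_succ_apply', Function.iterate_succ_apply']
      exact hF _ _ _ (fun j hj => ih k j (by omega))
  refine ⟨fun t => F^[t + 1] 0 t, ?_⟩
  funext t
  change F^[t + 1] 0 t = _
  rw [Function.iterate_succ_apply']
  refine hF _ _ _ (fun j hj => ?_)
  obtain ⟨k, rfl⟩ : ∃ k, t = j + 1 + k := ⟨t - (j + 1), by omega⟩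
  exact key (j + 1) k j (by omega)

/-- Closed-loop signals with equal inputs up to `t` agree up to `t`. -/
theorem loop_agree_aux {r m : ℕ} {G : Traj m → Traj r} {K : Traj r → Traj m}
    (hG : StrictlyCausal G) (hK : Causal K) {v v' : Traj r} {d d' : Traj m}
    {u u' : Traj m} (t : ℕ) (hu : u = K (G u + v) + d) (hu' : u' = K (G u' + v') + d')
    (hv : ∀ s, s ≤ t → v s = v' s) (hd : ∀ s, s ≤ t → d s = d' s) :
    ∀ s, s ≤ t → u s = u' s := by
  intro s
  induction s using Nat.strong_induction_on with
  | _ s ih =>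
    intro hs
    rw [hu, hu', Pi.add_apply, Pi.add_apply, hd s hs]
    congr 1
    refine hK _ _ _ (fun j hj => ?_)
    rw [Pi.add_apply, Pi.add_apply, hv j (by omega)]
    congr 1
    exact hG _ _ _ (fun i hi => ih i (by omega) (by omega))

/-- completeness — if the causal base controller `K'` is itself ℓ_p-stable
and its closed-loop map with the i.f.g. ℓ_p-stable strictly causal plant `G` is ℓ_p-stable
and i.f.g. ℓ_p-stable, then every causal ℓ_p-stabilizing controller `K''` is realized by
the architecture `u° = K'(y) + Q(y − G u°)` for some causal ℓ_p-stable `Q`. -/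
theorem statement13 {r m : ℕ} (p : ℝ) (hp : 1 ≤ p)
    (G : Traj m → Traj r) (K' : Traj r → Traj m) (K'' : Traj r → Traj m)
    (hG : StrictlyCausal G)
    (hGifg : ∃ γ : ℝ, 0 ≤ γ ∧ ∀ u₁ u₂ : Traj m, InLp p u₁ → InLp p u₂ →
      lpSeqNorm p (G u₁ - G u₂) ≤ γ * lpSeqNorm p (u₁ - u₂))
    (hK' : Causal K')
    -- K' is itself ℓ_p-stable as an operator
    (hK'stab : ∀ y : Traj r, InLp p y → InLp p (K' y))
    -- the closed-loop map of G and K' is ℓ_p-stable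
    (hCL'stab : ∀ (v : Traj r) (d : Traj m) (y : Traj r) (u : Traj m),
      y = G u + v → u = K' y + d → InLp p v → InLp p d → InLp p y ∧ InLp p u)
    -- the closed-loop map of G and K' is incrementally finite-gain ℓ_p-stable
    (hCL'ifg : ∃ γ : ℝ, 0 ≤ γ ∧
      ∀ (v₁ v₂ : Traj r) (d₁ d₂ : Traj m) (y₁ y₂ : Traj r) (u₁ u₂ : Traj m),
        y₁ = G u₁ + v₁ → u₁ = K' y₁ + d₁ →
        y₂ = G u₂ + v₂ → u₂ = K' y₂ + d₂ →
        InLp p v₁ → InLp p d₁ → InLp p v₂ → InLp p d₂ →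
        lpSeqNorm p (pairSeq y₁ u₁ - pairSeq y₂ u₂)
          ≤ γ * lpSeqNorm p (pairSeq v₁ d₁ - pairSeq v₂ d₂))
    (hK'' : Causal K'')
    -- the closed-loop map of G and K'' is ℓ_p-stable
    (hCL''stab : ∀ (v : Traj r) (d : Traj m) (y : Traj r) (u : Traj m),
      y = G u + v → u = K'' y + d → InLp p v → InLp p d → InLp p y ∧ InLp p u) :
    ∃ (Q : Traj r → Traj m) (K : Traj r → Traj m),
      Causal Q ∧
      (∀ ω : Traj r, InLp p ω → InLp p (Q ω)) ∧
      -- K y := u°, the unique solution of u° = K'(y) + Q(y − G u°)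
      (∀ (y : Traj r) (u0 : Traj m), u0 = K' y + Q (y - G u0) → K y = u0) ∧
      -- Φ_{G,K} = Φ_{G,K''}: the closed-loop solutions coincide
      (∀ (v : Traj r) (d : Traj m) (y : Traj r) (u : Traj m),
        y = G u + v → u = K y + d → u = K'' y + d) := by
  have hex : ∀ ω : Traj r, ∃ u : Traj m, u = K'' (G u + ω) := by
    intro ω
    refine fixed_exists_aux (fun u => K'' (G u + ω)) ?_
    intro x x' t h
    refine hK'' _ _ _ (fun j hj => ?_)
    rw [Pi.add_apply, Pi.add_apply]
    congr 1
    exact hG _ _ _ (fun i hi => h i (by omega))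
  choose U hU using hex
  have hU0 : ∀ ω, U ω = K'' (G (U ω) + ω) + 0 := fun ω => by rw [add_zero]; exact hU ω
  refine ⟨fun ω => U ω - K' (G (U ω) + ω), K'', ?_, ?_, ?_, ?_⟩
  · intro x x' t h
    have hag := loop_agree_aux hG hK'' t (hU0 x) (hU0 x') h (fun _ _ => rfl)
    change U x t - K' _ t = U x' t - K' _ t
    rw [hag t le_rfl]
    congr 1
    refine hK' _ _ _ (fun j hj => ?_)
    rw [Pi.add_apply, Pi.add_apply, h j hj]
    congr 1
    exact hG _ _ _ (fun i hi => hag i (by omega))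
  · intro ω hω
    have hz : InLp p (0 : Traj m) := by
      have h0 : p ≠ 0 := by linarith
      simp [InLp, Real.zero_rpow h0]
    obtain ⟨h1, h2⟩ := hCL''stab ω 0 _ _ rfl (hU0 ω) hω hz
    exact InLp_sub_aux hp h2 (hK'stab _ h1)
  · intro y u0 h
    obtain ⟨ω, hω⟩ : ∃ ω, ω = y - G u0 := ⟨_, rfl⟩
    have hy : y = G u0 + ω := by rw [hω]; abel
    rw [← hω] at h
    have h1 : u0 = K' (G u0 + ω) + (U ω - K' (G (U ω) + ω)) := by
      rw [← hy]; exact h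
    have h2 : U ω = K' (G (U ω) + ω) + (U ω - K' (G (U ω) + ω)) := by abel
    have he : u0 = U ω := by
      funext t
      exact loop_agree_aux hG hK' t h1 h2 (fun _ _ => rfl) (fun _ _ => rfl) t le_rfl
    rw [hy, he]
    exact (hU ω).symm
  · intro v d y u _ h
    exact h
end

section
/- Let p be a real number with 1 ≤ p < ∞. Let G̃ : ℓ^m → ℓ^r (the true plant) be strictly causal, ℓ_p-stable, and incrementally finite-gain ℓ_p-stable with incremental gain γ_{G̃}, and let G : ℓ^m → ℓ^r (the nominal model) be strictly causal. Assume the mismatch has finite ℓ_p-gain: there exists γ_Δ > 0 such that ‖G̃ u − G u‖_p ≤ γ_Δ ‖u‖_p for all u ∈ ℓ_p^m. Let Q : ℓ^r → ℓ^m be causal with finite ℓ_p-gain γ_Q (i.e., ‖Q ω‖_p ≤ γ_Q ‖ω‖_p for all ω ∈ ℓ_p^r), and suppose γ_Q γ_Δ < 1. Consider the closed loop with the internal-model controller built from G applied to the plant G̃: for each (v,d) ∈ ℓ^r × ℓ^m, the unique signals with u° = Q ω, ω = y − G u°, y = G̃(u° + d) + v. Then for all v ∈ ℓ_p^r and d ∈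 ℓ_p^m, the closed loop is stable: ω ∈ ℓ_p^r with ‖ω‖_p ≤ (1 − γ_Δ γ_Q)^{-1}(γ_{G̃} ‖d‖_p + ‖v‖_p), u° ∈ ℓ_p^m, and y ∈ ℓ_p^r. -/
noncomputable def trn {n : ℕ} (T : ℕ) (x : Traj n) : Traj n := fun t => if t < T then x t else 0

theorem lpn_nonneg {n : ℕ} (p : ℝ) (x : Traj n) : 0 ≤ lpSeqNorm p x :=
  Real.rpow_nonneg (tsum_nonneg fun _ => Real.rpow_nonneg (norm_nonneg _) _) _

theorem lp_mono {n : ℕ} {p : ℝ} (hp : 1 ≤ p) {x z : Traj n} (h : ∀ t, ‖x t‖ ≤ ‖z t‖)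
    (hz : InLp p z) : InLp p x ∧ lpSeqNorm p x ≤ lpSeqNorm p z := by
  have h1 : ∀ t, ‖x t‖ ^ p ≤ ‖z t‖ ^ p := fun t =>
    Real.rpow_le_rpow (norm_nonneg _) (h t) (by linarith)
  have hx : InLp p x :=
    Summable.of_nonneg_of_le (fun t => Real.rpow_nonneg (norm_nonneg _) _) h1 hz
  exact ⟨hx, Real.rpow_le_rpow (tsum_nonneg fun _ => Real.rpow_nonneg (norm_nonneg _) _)
    (Summable.tsum_le_tsum h1 hx hz) (by positivity)⟩

theorem lp_add {n : ℕ} {p : ℝ} (hp : 1 ≤ p) {x z : Traj n} (hx : InLp p x)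
    (hz : InLp p z) : InLp p (x + z) ∧ lpSeqNorm p (x + z) ≤ lpSeqNorm p x + lpSeqNorm p z := by
  have h := Real.Lp_add_le_tsum_of_nonneg hp (fun t => norm_nonneg (x t))
    (fun t => norm_nonneg (z t)) hx hz
  have h1 : ∀ t, ‖(x + z) t‖ ^ p ≤ (‖x t‖ + ‖z t‖) ^ p := fun t =>
    Real.rpow_le_rpow (norm_nonneg _) (norm_add_le _ _) (by linarith)
  have hs : InLp p (x + z) :=
    Summable.of_nonneg_of_le (fun t => Real.rpow_nonneg (norm_nonneg _) _) h1 h.1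
  refine ⟨hs, le_trans ?_ h.2⟩
  exact Real.rpow_le_rpow (tsum_nonneg fun _ => Real.rpow_nonneg (norm_nonneg _) _)
    (Summable.tsum_le_tsum h1 hs h.1) (by positivity)

theorem lp_sub {n : ℕ} {p : ℝ} (hp : 1 ≤ p) {x z : Traj n} (hx : InLp p x)
    (hz : InLp p z) : InLp p (x - z) := by
  rw [sub_eq_add_neg]
  exact (lp_add hp hx (lp_mono hp (x := -z) (fun t => by simp) hz).1).1

theorem trn_zero {n : ℕ} {p : ℝ} (hp : 1 ≤ p) (T : ℕ) (x : Traj n) :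
    ∀ t ∉ Finset.range T, ‖trn T x t‖ ^ p = 0 := by
  intro t ht
  have : ¬ t < T := by simpa using ht
  simp [trn, this, Real.zero_rpow (by linarith : p ≠ 0)]

theorem lp_trn {n : ℕ} {p : ℝ} (hp : 1 ≤ p) (T : ℕ) (x : Traj n) : InLp p (trn T x) :=
  summable_of_ne_finset_zero (trn_zero hp T x)

theorem lp_sup {n : ℕ} {p : ℝ} (hp : 1 ≤ p) (x : Traj n) (C : ℝ)
    (h : ∀ T, lpSeqNorm p (trn T x) ≤ C) : InLp p x ∧ lpSeqNorm p x ≤ C := by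
  have hp0 : 0 < p := by linarith
  have hC : 0 ≤ C := (lpn_nonneg p _).trans (h 0)
  have h0 : ∀ t, 0 ≤ ‖x t‖ ^ p := fun t => Real.rpow_nonneg (norm_nonneg _) _
  have hb : ∀ T, ∑ t ∈ Finset.range T, ‖x t‖ ^ p ≤ C ^ p := by
    intro T
    have h2 := h T
    unfold lpSeqNorm at h2
    rw [tsum_eq_sum (trn_zero hp T x)] at h2
    have h3 : ∑ t ∈ Finset.range T, ‖trn T x t‖ ^ p = ∑ t ∈ Finset.range T, ‖x t‖ ^ p := by
      refine Finset.sum_congr rfl fun t ht => ?_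
      simp [trn, Finset.mem_range.1 ht]
    rw [h3] at h2
    have hs := Finset.sum_nonneg (s := Finset.range T) fun t _ => h0 t
    have h4 := Real.rpow_le_rpow (Real.rpow_nonneg hs _) h2 hp0.le
    rwa [← Real.rpow_mul hs, one_div_mul_cancel hp0.ne', Real.rpow_one] at h4
  refine ⟨summable_of_sum_range_le h0 hb, ?_⟩
  have h5 := Real.rpow_le_rpow (tsum_nonneg h0) (Real.tsum_le_of_sum_range_le h0 hb)
    (by positivity : 0 ≤ 1 / p)
  rwa [← Real.rpow_mul hC, mul_one_div_cancel hp0.ne', Real.rpow_one] at h5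

/-- robustness of the internal-model controller under model mismatch with a
small-gain condition `γ_Q γ_Δ < 1`, with the explicit bound
`‖ω‖_p ≤ (1 − γ_Δ γ_Q)⁻¹ (γ_G̃ ‖d‖_p + ‖v‖_p)`. -/
theorem statement14 {r m : ℕ} (p : ℝ) (hp : 1 ≤ p)
    (Gt G : Traj m → Traj r) (Q : Traj r → Traj m)
    (γGt γΔ γQ : ℝ)
    (hGt : StrictlyCausal Gt)
    (hGtstab : ∀ u : Traj m, InLp p u → InLp p (Gt u))
    (hγGt : 0 ≤ γGt)
    -- G̃ is incrementally finite-gain ℓ_p-stable with incremental gain γ_G̃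
    (hGtifg : ∀ u₁ u₂ : Traj m, InLp p u₁ → InLp p u₂ →
      lpSeqNorm p (Gt u₁ - Gt u₂) ≤ γGt * lpSeqNorm p (u₁ - u₂))
    (hG : StrictlyCausal G)
    -- the mismatch has finite ℓ_p-gain γ_Δ > 0
    (hγΔ : 0 < γΔ)
    (hΔ : ∀ u : Traj m, InLp p u →
      InLp p (Gt u - G u) ∧ lpSeqNorm p (Gt u - G u) ≤ γΔ * lpSeqNorm p u)
    (hQ : Causal Q)
    -- Q has finite ℓ_p-gain γ_Q
    (hγQ : 0 ≤ γQ)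
    (hQgain : ∀ ω : Traj r, InLp p ω →
      InLp p (Q ω) ∧ lpSeqNorm p (Q ω) ≤ γQ * lpSeqNorm p ω)
    -- small-gain condition
    (hsg : γQ * γΔ < 1) :
    ∀ (v : Traj r) (d : Traj m), InLp p v → InLp p d →
      ∀ (y ω : Traj r) (u0 : Traj m),
        u0 = Q ω → ω = y - G u0 → y = Gt (u0 + d) + v →
        InLp p ω ∧
        lpSeqNorm p ω ≤ (1 - γΔ * γQ)⁻¹ * (γGt * lpSeqNorm p d + lpSeqNorm p v) ∧
        InLp p u0 ∧ InLp p y := by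
  intro v d hv hd y ω u0 hu hω hy
  have key : ∀ T, lpSeqNorm p (trn T ω) ≤
      (1 - γΔ * γQ)⁻¹ * (γGt * lpSeqNorm p d + lpSeqNorm p v) := by
    intro T
    have huT := lp_trn hp T u0
    set uT := trn T u0 with huTd
    have e : ∀ s, s < T → u0 s = uT s := fun s hs => by simp [huTd, trn, hs]
    have hud := (lp_add hp huT hd).1
    have hA : InLp p (Gt (uT + d) - Gt uT) := lp_sub hp (hGtstab _ hud) (hGtstab _ huT)
    have hB := hΔ uT huT
    have hAn := hGtifg _ _ hud huT
    rw [add_sub_cancel_left] at hAn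
    have hAB := lp_add hp hA hB.1
    have hABv := lp_add hp hAB.1 hv
    have hle : lpSeqNorm p (trn T ω) ≤
        lpSeqNorm p (Gt (uT + d) - Gt uT + (Gt uT - G uT) + v) := by
      refine (lp_mono hp (fun t => ?_) hABv.1).2
      by_cases ht : t < T
      · have e1 : G u0 t = G uT t := hG _ _ t fun s hs => e s (hs.trans ht)
        have e2 : Gt (u0 + d) t = Gt (uT + d) t := hGt _ _ t fun s hs => by
          simp [e s (hs.trans ht)]
        have : trn T ω t = (Gt (uT + d) - Gt uT + (Gt uT - G uT) + v) t := by
          have e3 : trn T ω t = ω t := by simp [trn, ht]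
          have e4 : ω t = Gt (u0 + d) t + v t - G u0 t := by
            have := congrFun hω t
            rw [hy] at this
            simpa using this
          rw [e3, e4, e1, e2]
          simp only [Pi.add_apply, Pi.sub_apply]
          abel
        rw [this]
      · simp [trn, ht]
    have hq := hQgain _ (lp_trn hp T ω)
    have hule : lpSeqNorm p uT ≤ lpSeqNorm p (Q (trn T ω)) := by
      refine (lp_mono hp (fun t => ?_) hq.1).2
      by_cases ht : t < T
      · have e1 : Q ω t = Q (trn T ω) t := hQ _ _ t fun s hs => by
          simp [trn, lt_of_le_of_lt hs ht]
        rw [← e t ht, hu, e1]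
      · simp [huTd, trn, ht]
    have hm := mul_le_mul_of_nonneg_left (hule.trans hq.2) hγΔ.le
    have hpos : 0 < 1 - γΔ * γQ := by linarith [mul_comm γΔ γQ]
    rw [inv_mul_eq_div, le_div_iff₀ hpos]
    have := hABv.2
    have := hAB.2
    have := hB.2
    nlinarith
  obtain ⟨h1, h2⟩ := lp_sup hp ω _ key
  have h3 : InLp p u0 := hu ▸ (hQgain ω h1).1
  refine ⟨h1, h2, h3, ?_⟩
  rw [hy]
  exact (lp_add hp (hGtstab _ (lp_add hp h3 hd).1) hv).1
end

section
/- Let G : ℓ^m → ℓ^r be strictly causal and exponentially stable (G maps every exponentially decaying sequence to an exponentially decaying sequence). Let Ψ^{u°} : ℓ^r × ℓ^m → ℓ^m be causal–strictly-causal, and define Ψ^u(v,d) := d + Ψ^{u°}(v,d) and Ψ^y(v,d) := G(Ψ^u(v,d)) + v. Then the map (Ψ^y, Ψ^u) is exponentially stable — i.e., Ψ^y(v,d) and Ψ^u(v,d) are exponentially decaying whenever v and d are exponentially decaying — if and only if Ψ^{u°} is exponentially stable, i.e., Ψ^{u°}(v,d) is exponentially decaying whenever v and d are exponentially decaying. 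-/
theorem ExpDecay.add_aux {n : ℕ} {x y : Traj n} (hx : ExpDecay x) (hy : ExpDecay y) :
    ExpDecay (x + y) := by
  obtain ⟨k, hk, a, ha, ha1, h⟩ := hx
  obtain ⟨l, hl, b, hb, hb1, h'⟩ := hy
  refine ⟨k + l, by positivity, max a b, lt_max_of_lt_left ha, max_lt ha1 hb1, fun t => ?_⟩
  have h1 : a ^ t ≤ (max a b) ^ t := pow_le_pow_left₀ ha.le (le_max_left _ _) t
  have h2 : b ^ t ≤ (max a b) ^ t := pow_le_pow_left₀ hb.le (le_max_right _ _) t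
  have h3 := mul_le_mul_of_nonneg_left h1 hk.le
  have h4 := mul_le_mul_of_nonneg_left h2 hl.le
  have h5 : ‖(x + y) t‖ ≤ ‖x t‖ + ‖y t‖ := norm_add_le _ _
  have h6 := h t
  have h7 := h' t
  linarith

theorem ExpDecay.neg_aux {n : ℕ} {x : Traj n} (hx : ExpDecay x) : ExpDecay (-x) := by
  obtain ⟨k, hk, a, ha, ha1, h⟩ := hx
  exact ⟨k, hk, a, ha, ha1, fun t => by simpa using h t⟩

/-- for a strictly causal exponentially stable plant `G` and a
causal–strictly-causal parameter `Ψ^{u°}`, the closed-loop maps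
`Ψ^u(v,d) = d + Ψ^{u°}(v,d)`, `Ψ^y(v,d) = G(Ψ^u(v,d)) + v` are exponentially stable iff
`Ψ^{u°}` is exponentially stable. -/
theorem statement18 {r m : ℕ} (G : Traj m → Traj r)
    (hG : StrictlyCausal G)
    (hGexp : ∀ u : Traj m, ExpDecay u → ExpDecay (G u))
    (Ψuo : Traj r → Traj m → Traj m)
    (hΨuo : CausalSC Ψuo) :
    ((∀ (v : Traj r) (d : Traj m), ExpDecay v → ExpDecay d →
        ExpDecay (G (d + Ψuo v d) + v) ∧ ExpDecay (d + Ψuo v d))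
      ↔
      (∀ (v : Traj r) (d : Traj m), ExpDecay v → ExpDecay d → ExpDecay (Ψuo v d))) := by
  constructor
  · intro h v d hv hd
    have h1 := (h v d hv hd).2.add_aux hd.neg_aux
    have h2 : d + Ψuo v d + -d = Ψuo v d := by abel
    rwa [h2] at h1
  · intro h v d hv hd
    have h1 := hd.add_aux (h v d hv hd)
    exact ⟨(hGexp _ h1).add_aux hv, h1⟩
end
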